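/- arXiv:2405.19071 — 5 statements merged into one kernel-verified Lean document; each statement's English description precedes it below -/
import Mathlib

section
/- For online bin stretching with m = 2 bins, every behavioral randomized online algorithm A satisfies sup over all instances I of E(I,A) ≥ 7/6; in other words, no randomized online algorithm has stretching factor (worst-case expected load of the fullest bin) strictly less than 7/6. -/
/-!
Two instances share the prefix `1/3, 1/3`: the list `1/3, 1/3, 2/3, 2/3` and the list
`1/3, 1/3, 1`. Let `s` be the probability that the algorithm puts the two items of the prefix
into the same bin; it is the same number for both instances, because decisions depend only on
the items seen so far. If the two items share a bin, the first continuation forces a load of at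
least `4/3` and the second of at least `1`; if they are separated, the bounds are exchanged. Hence
the two expected payoffs are at least `s * (4/3) + (1 - s)` and `s + (1 - s) * (4/3)`, whose sum is
`7/3`, and one of them is at least `7/6`.

Since the supremum is taken in `ℝ`, the expected payoffs must also be shown bounded above; the
total size `≤ 2` of an instance is such a bound.
-/

open scoped BigOperators

namespace BinStretch

def Fits (m : ℕ) (I : List ℝ) : Prop :=
  ∃ σ : Fin I.length → Fin m,
    ∀ b : Fin m, ∑ i ∈ Finset.univ.filter fun i => σ i = b, I.get i ≤ 1

def IsInstance (m : ℕ) (I : List ℝ) : Prop :=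
  (∀ a ∈ I, 0 < a ∧ a ≤ 1) ∧ Fits m I

noncomputable def payoff (m : ℕ) (I : List ℝ) (D : Fin I.length → Fin m) : ℝ :=
  ⨆ b : Fin m, ∑ i ∈ Finset.univ.filter fun i => D i = b, I.get i

noncomputable def prob {m : ℕ} (A : List ℝ → PMF (Fin m)) (I : List ℝ)
    (D : Fin I.length → Fin m) : ℝ :=
  ∏ i : Fin I.length, ((A (I.take (i.1 + 1))) (D i)).toReal

noncomputable def expPayoff (m : ℕ) (A : List ℝ → PMF (Fin m)) (I : List ℝ) : ℝ :=
  ∑ D : Fin I.length → Fin m, prob A I D * payoff m I D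

def detRun {m : ℕ} (A : List ℝ → Fin m) (I : List ℝ) : Fin I.length → Fin m :=
  fun i => A (I.take (i.1 + 1))

end BinStretch

namespace BinStretch

/-- Total mass one of a product distribution. -/
lemma sum_prod_eq_one {n : ℕ} (p : Fin n → Fin 2 → ℝ) (hp : ∀ i, ∑ b, p i b = 1) :
    ∑ D : Fin n → Fin 2, ∏ i, p i (D i) = 1 := by
  rw [← Fintype.prod_sum]
  simp [hp]

/-- Expectation, under a product distribution, of a function that depends only on whether the
first two coordinates agree. -/
lemma sum_prod_mul_ite {n : ℕ} (p : Fin (n + 2) → Fin 2 → ℝ) (hp : ∀ i, ∑ b, p i b = 1)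
    (u v : ℝ) :
    ∑ D : Fin (n + 2) → Fin 2, (∏ i, p i (D i)) * (if D 0 = D 1 then u else v) =
      (p 0 0 * p 1 0 + p 0 1 * p 1 1) * u + (1 - (p 0 0 * p 1 0 + p 0 1 * p 1 1)) * v := by
  have htail : ∑ D : Fin n → Fin 2, ∏ i, p i.succ.succ (D i) = 1 :=
    sum_prod_eq_one (fun i => p i.succ.succ) fun i => hp _
  have key : ∀ b c : Fin 2, ∑ D : Fin n → Fin 2,
      (p 0 b * (p 1 c * ∏ i, p i.succ.succ (D i))) * (if b = c then u else v) =
        p 0 b * p 1 c * (if b = c then u else v) := by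
    intro b c
    rw [← Finset.sum_mul, ← Finset.mul_sum, ← Finset.mul_sum, htail, mul_one]
  have hsplit : ∀ (k : ℕ) (f : (Fin (k + 1) → Fin 2) → ℝ),
      ∑ D, f D = ∑ b, ∑ D, f (Fin.cons b D) := by
    intro k f
    rw [← (Fin.consEquiv fun _ => Fin 2).sum_comp, Fintype.sum_prod_type]
    rfl
  have h0 := hp 0
  have h1 := hp 1
  rw [Fin.sum_univ_two] at h0 h1
  rw [hsplit]
  simp_rw [hsplit n, Fin.prod_univ_succ]
  simp only [Fin.cons_zero, Fin.cons_succ, Fin.cons_one, Fin.succ_zero_eq_one, key]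
  simp only [Fin.sum_univ_two, if_true, zero_ne_one, one_ne_zero, if_false]
  linear_combination (v * (p 1 0 + p 1 1)) * h0 + v * h1

lemma sum_toReal_eq_one (q : PMF (Fin 2)) : ∑ b, (q b).toReal = 1 := by
  rw [← ENNReal.toReal_sum fun b _ => q.apply_ne_top b, ← tsum_fintype (L := .unconditional _),
    q.tsum_coe, ENNReal.toReal_one]

lemma prob_nonneg (A : List ℝ → PMF (Fin 2)) (I : List ℝ) (D : Fin I.length → Fin 2) :
    0 ≤ prob A I D :=
  Finset.prod_nonneg fun _ _ => ENNReal.toReal_nonneg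

lemma sum_prob (A : List ℝ → PMF (Fin 2)) (I : List ℝ) : ∑ D, prob A I D = 1 :=
  sum_prod_eq_one (fun i b => ((A (I.take (i.1 + 1))) b).toReal) fun _ => sum_toReal_eq_one _

lemma load_le_payoff (I : List ℝ) (D : Fin I.length → Fin 2) (b : Fin 2) :
    ∑ i, (if D i = b then I.get i else 0) ≤ payoff 2 I D := by
  rw [← Finset.sum_filter]
  exact le_ciSup (f := fun b : Fin 2 => ∑ i ∈ Finset.univ.filter fun i => D i = b, I.get i)
    (Set.finite_range _).bddAbove b

lemma payoff_le_two {I : List ℝ} (hI : IsInstance 2 I) (D : Fin I.length → Fin 2) :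
    payoff 2 I D ≤ 2 := by
  obtain ⟨hpos, σ, hσ⟩ := hI
  have htot : ∑ i, I.get i ≤ 2 := by
    rw [← Finset.sum_fiberwise Finset.univ σ, Fin.sum_univ_two]
    linarith [hσ 0, hσ 1]
  refine ciSup_le fun b => le_trans ?_ htot
  exact Finset.sum_le_sum_of_subset_of_nonneg (Finset.filter_subset _ _)
    fun i _ _ => (hpos _ (I.get_mem i)).1.le

lemma expPayoff_le_two (A : List ℝ → PMF (Fin 2)) {I : List ℝ} (hI : IsInstance 2 I) :
    expPayoff 2 A I ≤ 2 := by
  calc expPayoff 2 A I ≤ ∑ D, prob A I D * 2 :=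
        Finset.sum_le_sum fun D _ =>
          mul_le_mul_of_nonneg_left (payoff_le_two hI D) (prob_nonneg A I D)
    _ = 2 := by rw [← Finset.sum_mul, sum_prob, one_mul]

/-- Probability that the first two items `1/3, 1/3` are packed into the same bin. -/
noncomputable def togetherProb (A : List ℝ → PMF (Fin 2)) : ℝ :=
  (A [1/3] 0).toReal * (A [1/3, 1/3] 0).toReal + (A [1/3] 1).toReal * (A [1/3, 1/3] 1).toReal

/-- A payoff bound in terms of whether the two leading items `1/3, 1/3` share a bin gives a bound
on the expected payoff in terms of `togetherProb`. -/
lemma le_expPayoff (A : List ℝ → PMF (Fin 2)) (t : List ℝ) (u v : ℝ)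
    (h : ∀ D : Fin (t.length + 2) → Fin 2,
      (if D 0 = D 1 then u else v) ≤ payoff 2 (1/3 :: 1/3 :: t) D) :
    togetherProb A * u + (1 - togetherProb A) * v ≤ expPayoff 2 A (1/3 :: 1/3 :: t) := by
  have hs := sum_prod_mul_ite (n := t.length)
    (fun i b => ((A ((1/3 :: 1/3 :: t).take (i.1 + 1))) b).toReal)
    (fun _ => sum_toReal_eq_one _) u v
  have hs' : _ = togetherProb A * u + (1 - togetherProb A) * v := hs
  rw [← hs']
  exact Finset.sum_le_sum fun D _ =>
    mul_le_mul_of_nonneg_left (h D) (prob_nonneg A (1/3 :: 1/3 :: t) D)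

lemma isInstance_four : IsInstance 2 [1/3, 1/3, 2/3, 2/3] := by
  refine ⟨by intro a ha; simp at ha; rcases ha with rfl | rfl <;> norm_num,
    (![0, 1, 0, 1] : Fin 4 → Fin 2), fun b => ?_⟩
  rw [Finset.sum_filter]
  change ∑ i : Fin 4, _ ≤ _
  rw [Fin.sum_univ_four]
  fin_cases b <;> simp <;> norm_num

lemma isInstance_three : IsInstance 2 [1/3, 1/3, 1] := by
  refine ⟨by intro a ha; simp at ha; rcases ha with rfl | rfl <;> norm_num,
    (![0, 0, 1] : Fin 3 → Fin 2), fun b => ?_⟩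
  rw [Finset.sum_filter]
  change ∑ i : Fin 3, _ ≤ _
  rw [Fin.sum_univ_three]
  fin_cases b <;> simp <;> norm_num

lemma payoff_four (D : Fin 4 → Fin 2) :
    (if D 0 = D 1 then 4/3 else 1) ≤ payoff 2 [1/3, 1/3, 2/3, 2/3] D := by
  have h : ∀ b : Fin 2, ∑ i : Fin 4, (if D i = b then ([1/3, 1/3, 2/3, 2/3] : List ℝ).get i else 0)
      ≤ payoff 2 [1/3, 1/3, 2/3, 2/3] D := load_le_payoff [1/3, 1/3, 2/3, 2/3] D
  have h0 := h 0
  have h1 := h 1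
  rw [Fin.sum_univ_four] at h0 h1
  generalize payoff 2 [1/3, 1/3, 2/3, 2/3] D = P at *
  have hb : ∀ i, D i = 0 ∨ D i = 1 := fun i => by generalize D i = x; revert x; decide
  rcases hb 0 with e0 | e0 <;> rcases hb 1 with e1 | e1 <;> rcases hb 2 with e2 | e2 <;>
    rcases hb 3 with e3 | e3 <;> simp [e0, e1, e2, e3] at h0 h1 ⊢ <;> linarith

lemma payoff_three (D : Fin 3 → Fin 2) :
    (if D 0 = D 1 then 1 else 4/3) ≤ payoff 2 [1/3, 1/3, 1] D := by
  have h : ∀ b : Fin 2, ∑ i : Fin 3, (if D i = b then ([1/3, 1/3, 1] : List ℝ).get i else 0)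
      ≤ payoff 2 [1/3, 1/3, 1] D := load_le_payoff [1/3, 1/3, 1] D
  have h0 := h 0
  have h1 := h 1
  rw [Fin.sum_univ_three] at h0 h1
  generalize payoff 2 [1/3, 1/3, 1] D = P at *
  have hb : ∀ i, D i = 0 ∨ D i = 1 := fun i => by generalize D i = x; revert x; decide
  rcases hb 0 with e0 | e0 <;> rcases hb 1 with e1 | e1 <;> rcases hb 2 with e2 | e2 <;>
    simp [e0, e1, e2] at h0 h1 ⊢ <;> linarith

end BinStretch

theorem randomized_lower_bound_two_bins (A : List ℝ → PMF (Fin 2)) :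
    (7 : ℝ) / 6 ≤ ⨆ I : {I : List ℝ // BinStretch.IsInstance 2 I},
      BinStretch.expPayoff 2 A I.1 := by
  have hbdd : BddAbove (Set.range fun I : {I : List ℝ // BinStretch.IsInstance 2 I} =>
      BinStretch.expPayoff 2 A I.1) :=
    ⟨2, by rintro _ ⟨I, rfl⟩; exact BinStretch.expPayoff_le_two A I.2⟩
  have h4 := le_ciSup hbdd ⟨_, BinStretch.isInstance_four⟩
  have h3 := le_ciSup hbdd ⟨_, BinStretch.isInstance_three⟩
  have k4 := BinStretch.le_expPayoff A [2/3, 2/3] (4/3) 1 BinStretch.payoff_four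
  have k3 := BinStretch.le_expPayoff A [1] 1 (4/3) BinStretch.payoff_three
  dsimp only at h4 h3
  linarith
end

section
/- For online bin stretching with m = 2 bins, there exist two deterministic online algorithms A₁, A₂ and a probability p ∈ [0,1] such that for every instance I, p·f(I,A₁(I)) + (1−p)·f(I,A₂(I)) ≤ 5/4. In other words, there is a 5/4-competitive randomized algorithm in the class 𝓜₂ of mixtures of two deterministic algorithms, which outperforms the optimal deterministic stretching factor of 4/3. -/
/-!
The mixture uses `p = 1/2` and two rules that look only at the current loads of their own bins; it
has to be shown that the two final maximal loads add up to at most `5/2`.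

* The first rule (`First`) is first fit with capacity `5/4`; an item fitting nowhere goes to the
  less loaded bin. It can exceed `5/4` only if there are two items larger than `1/2` and the other
  items have total size strictly between `1/2` and `3/4`.
* The second rule (`Second`) prepares for two such big items: from the items of size at most `1/2`
  it builds a bin with load in `[1/4, 1/2]` (the reserved bin), sends further small items to the
  other bin and the first big item onto the reserved one. As soon as some load is at least `3/4`
  it always uses the less loaded bin.

The only properties of an instance that matter are that item sizes lie in `(0, 1]`, that the total
size is at most `2`, and that at most two items are big, i.e. larger than `1/2`. The relation `Inv`
lists the joint configurations of loads that can occur. `Inv.step` shows that it is preserved by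
every admissible item, and `Inv.sum_le` that it forces the bound `5/2`. A recurring reason is that
a pair of loads that are both at most `5/4`, one of them being at least `3/4`, can never be spoiled
by either rule, because the total size is at most `2` (`Safe`).
-/

open scoped BigOperators

namespace BinStretch

/-! ### The two placement rules -/

/-- The first rule puts an item of size `e` into bin `0` (load `x`) rather than bin `1` (load `y`):
first fit with capacity `5/4`, and the less loaded bin if neither bin has room. -/
def First (x y e : ℝ) : Prop := x + e ≤ 5/4 ∨ (5/4 < y + e ∧ x ≤ y)

lemma first_of_fit {x y e : ℝ} (h : x + e ≤ 5/4) : First x y e := Or.inl h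

lemma not_first {x y e : ℝ} (h : 5/4 < x + e) (h' : y + e ≤ 5/4 ∨ y < x) : ¬ First x y e := by
  rintro (h1 | ⟨h1, h2⟩)
  · linarith
  · rcases h' with h' | h' <;> linarith

/-- A load at which a bin is reserved for a big item by the second rule. -/
def Reserved (t : ℝ) : Prop := 1/4 ≤ t ∧ t ≤ 1/2

open Classical in
/-- The second rule puts an item of size `e` into bin `0` (load `u`) rather than bin `1`
(load `v`). -/
def Second (u v e : ℝ) : Prop :=
  if 3/4 ≤ u ∨ 3/4 ≤ v then u ≤ v
  else if Reserved v then e ≤ 1/2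
  else if Reserved u then 1/2 < e
  else if e ≤ 1/2 then 1/2 < v + e
  else u ≤ v

lemma second_of_large {u v : ℝ} (e : ℝ) (h : 3/4 ≤ u ∨ 3/4 ≤ v) : Second u v e ↔ u ≤ v := by
  unfold Second; rw [if_pos h]

lemma second_of_reserved_right {u v : ℝ} (e : ℝ) (hu : u < 3/4) (hv : Reserved v) :
    Second u v e ↔ e ≤ 1/2 := by
  have h : ¬ (3/4 ≤ u ∨ 3/4 ≤ v) := by
    rintro (h | h)
    · linarith
    · linarith [hv.2]
  unfold Second; rw [if_neg h, if_pos hv]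

lemma second_of_reserved_left {u v : ℝ} (e : ℝ) (hv : v < 3/4) (hu : Reserved u)
    (hv' : ¬ Reserved v) : Second u v e ↔ 1/2 < e := by
  have h : ¬ (3/4 ≤ u ∨ 3/4 ≤ v) := by
    rintro (h | h)
    · linarith [hu.2]
    · linarith
  unfold Second; rw [if_neg h, if_neg hv', if_pos hu]

lemma second_of_not_reserved {u v : ℝ} (e : ℝ) (hu : u < 3/4) (hv : v < 3/4)
    (hu' : ¬ Reserved u) (hv' : ¬ Reserved v) :
    Second u v e ↔ (e ≤ 1/2 ∧ 1/2 < v + e) ∨ (1/2 < e ∧ u ≤ v) := by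
  have h : ¬ (3/4 ≤ u ∨ 3/4 ≤ v) := by
    rintro (h | h) <;> linarith
  unfold Second; rw [if_neg h, if_neg hv', if_neg hu']
  split_ifs with h'
  · constructor
    · exact fun h => Or.inl ⟨h', h⟩
    · rintro (h | h)
      · exact h.2
      · linarith [h.1]
  · push Not at h'
    constructor
    · exact fun h => Or.inr ⟨h', h⟩
    · rintro (h | h)
      · linarith [h.1]
      · exact h.2

/-! ### The invariant -/

/-- Both loads are at most `5/4` and one of them is at least `3/4`. Since the total size is at most
`2`, an item that does not fit below `5/4` into one bin fits into the other one. -/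
def Safe (x y : ℝ) : Prop := x ≤ 5/4 ∧ y ≤ 5/4 ∧ (3/4 ≤ x ∨ 3/4 ≤ y)

/-- Joint configurations after some items, `k` of them larger than `1/2`: the first rule has loads
`x, y`, the second one has loads `u, v`. -/
inductive Inv (k : ℕ) (x y u v : ℝ) : Prop
  /-- Only small items, with total size below `1/4`, together in one bin under both rules. -/
  | start (hk : k = 0) (hy : y = 0) (hu : u = 0) (hv : v < 1/4)
  /-- Only small items, and bin `1` is reserved. -/
  | right (hk : k = 0) (hy : y = 0) (hu : u < 3/4) (hv : Reserved v)
  /-- Only small items, and bin `0` is reserved. -/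
  | left (hk : k = 0) (hy : y = 0) (hu : Reserved u) (hv : v < 3/4)
  /-- One big item, which came before any bin was reserved. -/
  | early (hk : k = 1) (hy : y = 0) (hu : 1/2 < u) (hu' : u < 3/4) (hv : v ≤ 1/2)
  /-- The maximal loads stay at most `5/4` from now on. -/
  | safe (h1 : Safe x y) (h2 : Safe u v)
  /-- All loads are at most `5/4` and only small items can follow. -/
  | noBig (hk : k = 2) (hx : x ≤ 5/4) (hy : y ≤ 5/4) (hu : u ≤ 5/4) (hv : v ≤ 5/4)
  /-- The second rule has exceeded `5/4` by at most what the first rule has in reserve. -/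
  | over₂ (w : ℝ) (hw : w = u ∨ w = v) (h : 5/4 < w) (hy : w ≤ y + 1/2) (hy1 : y ≤ 1)
  /-- The critical situation: `y` is a big item that did not fit into the first bin, and the second
  rule has put this item onto its reserved bin, obtaining load `q`. -/
  | critical (p q : ℝ) (hpq : (p = u ∧ q = v) ∨ (p = v ∧ q = u)) (hk : k = 1)
      (hx : x < 3/4) (hy : y < 3/4) (hxy : 5/4 < x + y)
      (hq : q ≤ y + 1/2) (hq' : y + 1/4 ≤ q)
  /-- The first rule has exceeded `5/4` with load `z`, the other load being `o`. -/
  | over₁ (z o : ℝ) (hzo : (z = x ∧ o = y) ∨ (z = y ∧ o = x)) (hz : 5/4 < z)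
      (hu : u ≤ o + 1/2) (hv : v ≤ o + 1/2)

/-- In `over₁` a load of the second rule is at most `o + 1/2` with `z + o ≤ 2`, and in `over₂` the
large load is at most `y + 1/2` with `x + y ≤ 2` and `y ≤ 1`; in the other cases every load is at
most `5/4`. -/
lemma Inv.sum_le {k : ℕ} {x y u v : ℝ} (h : Inv k x y u v) (hx : 0 ≤ x) (hy : 0 ≤ y) (hu : 0 ≤ u)
    (hv : 0 ≤ v) (hb : x + y = u + v) (ht : x + y ≤ 2) : max x y + max u v ≤ 5/2 := by
  have key : x + u ≤ 5/2 ∧ x + v ≤ 5/2 ∧ y + u ≤ 5/2 ∧ y + v ≤ 5/2 := by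
    rcases h with ⟨hk, hy0, hu0, hv0⟩ | ⟨hk, hy0, hu0, hv0, hv1⟩ | ⟨hk, hy0, ⟨hu0, hu1⟩, hv0⟩ |
      ⟨hk, hy0, hu0, hu1, hv0⟩ | ⟨⟨a1, a2, -⟩, b1, b2, -⟩ | ⟨hk, a1, a2, b1, b2⟩ |
      ⟨w, rfl | rfl, h1, h2, h3⟩ | ⟨p, q, ⟨rfl, rfl⟩ | ⟨rfl, rfl⟩, hk, h1, h2, h3, h4, h5⟩ |
      ⟨z, o, ⟨rfl, rfl⟩ | ⟨rfl, rfl⟩, h1, h2, h3⟩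
    all_goals refine ⟨?_, ?_, ?_, ?_⟩ <;> linarith
  rcases max_choice x y with h1 | h1 <;> rcases max_choice u v with h2 | h2 <;>
    rw [h1, h2] <;> linarith [key.1, key.2.1, key.2.2.1, key.2.2.2]

open Classical in
/-- The loads after an item of size `e`, which goes to bin `0` exactly if `c` holds. -/
noncomputable def put (c : Prop) (s : ℝ × ℝ) (e : ℝ) : ℝ × ℝ :=
  if c then (s.1 + e, s.2) else (s.1, s.2 + e)

lemma put_pos {c : Prop} (h : c) (x y e : ℝ) : put c (x, y) e = (x + e, y) := by simp [put, h]

lemma put_neg {c : Prop} (h : ¬ c) (x y e : ℝ) : put c (x, y) e = (x, y + e) := by simp [put, h]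

lemma Safe.first {x y e : ℝ} (h : Safe x y) (he : 0 < e) (ht : x + y + e ≤ 2) :
    Safe (put (First x y e) (x, y) e).1 (put (First x y e) (x, y) e).2 := by
  obtain ⟨h1, h2, h3⟩ := h
  by_cases hf : x + e ≤ 5/4
  · rw [put_pos (first_of_fit hf)]
    exact ⟨hf, h2, h3.imp (fun h => by simp only; linarith) id⟩
  · have hx : 3/4 ≤ x := by
      rcases h3 with h3 | h3 <;> linarith
    have : ¬ First x y e := not_first (by linarith) (Or.inl (by linarith))
    rw [put_neg this]
    exact ⟨h1, by simp only; linarith, Or.inl hx⟩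

lemma Safe.second {u v e : ℝ} (h : Safe u v) (ht : u + v + e ≤ 2) :
    Safe (put (Second u v e) (u, v) e).1 (put (Second u v e) (u, v) e).2 := by
  obtain ⟨h1, h2, h3⟩ := h
  have hs := second_of_large e h3
  by_cases hf : u ≤ v
  · have hv : 3/4 ≤ v := by
      rcases h3 with h3 | h3 <;> linarith
    rw [put_pos (hs.2 hf)]
    exact ⟨by simp only; linarith, h2, Or.inr hv⟩
  · have hu : 3/4 ≤ u := by
      rcases h3 with h3 | h3 <;> linarith
    rw [put_neg (fun h => hf (hs.1 h))]
    exact ⟨h1, by simp only; linarith, Or.inl hu⟩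

/-- If bin `1` is empty, first fit becomes safe as soon as the total size reaches `3/4` by a small
item: if that item does not fit into bin `0`, then already `x > 3/4`. -/
lemma safe_first_of_small {x e : ℝ} (he : 0 < e) (he' : e ≤ 1/2) (hx1 : x ≤ 5/4)
    (hx : 3/4 ≤ x + e) :
    Safe (put (First x 0 e) (x, 0) e).1 (put (First x 0 e) (x, 0) e).2 := by
  by_cases hf : x + e ≤ 5/4
  · rw [put_pos (first_of_fit hf)]
    exact ⟨hf, by norm_num, Or.inl hx⟩
  · have : ¬ First x 0 e := not_first (by linarith) (Or.inl (by linarith))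
    rw [put_neg this]
    exact ⟨hx1, by simp only; linarith, Or.inl (by simp only; linarith)⟩

/-! ### Preservation of the invariant -/

section Steps

variable {k k' : ℕ} {x y u v e : ℝ}

/-- `Inv` after both rules have placed an item of size `e`. -/
def Next (k' : ℕ) (x y u v e : ℝ) : Prop :=
  Inv k' (put (First x y e) (x, y) e).1 (put (First x y e) (x, y) e).2
    (put (Second u v e) (u, v) e).1 (put (Second u v e) (u, v) e).2

lemma next_start (hv : v < 1/4) (hv0 : 0 ≤ v) (he1 : e ≤ 1)
    (hs : e ≤ 1/2 → k' = 0) (hb : 1/2 < e → k' = 1) : Next k' v 0 0 v e := by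
  unfold Next
  have hf : First v 0 e := first_of_fit (by linarith)
  have h0 : ¬ Reserved 0 := fun h => by linarith [h.1]
  have h1 : ¬ Reserved v := fun h => by linarith [h.1]
  have h := second_of_not_reserved e (by norm_num) (by linarith) h0 h1
  rw [put_pos hf]
  by_cases hsm : e ≤ 1/2
  · by_cases hve : v + e ≤ 1/2
    · have : ¬ Second 0 v e := by
        rw [h]; rintro (h | h) <;> linarith [h.1, h.2]
      rw [put_neg this]
      by_cases h4 : v + e < 1/4
      · exact .start (hs hsm) rfl rfl h4
      · exact .right (hs hsm) rfl (by norm_num) ⟨not_lt.1 h4, hve⟩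
    · rw [put_pos (h.2 (Or.inl ⟨hsm, not_le.1 hve⟩))]
      refine .left (hs hsm) rfl ⟨?_, ?_⟩ ?_ <;> simp only <;> linarith
  · push Not at hsm
    rw [put_pos (h.2 (Or.inr ⟨hsm, hv0⟩))]
    by_cases h34 : e < 3/4
    · refine .early (hb hsm) rfl ?_ ?_ ?_ <;> simp only <;> linarith
    · refine .safe ⟨?_, ?_, Or.inl ?_⟩ ⟨?_, ?_, Or.inl ?_⟩ <;> simp only <;> linarith

/-- The first big item `e` arrives when the second rule has a reserved bin of load `d` and another
bin of load `t`, and is put onto the reserved bin. The resulting loads `p, q` are `t` and `d + e` in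
either order, which covers the cases of bin `0` and bin `1` being reserved. -/
lemma first_big {d t : ℝ} {p q : ℝ} (hpq : (p = t ∧ q = d + e) ∨ (p = d + e ∧ q = t))
    (ht0 : 0 ≤ t) (ht : t < 3/4) (hd : Reserved d) (he : 1/2 < e) (he1 : e ≤ 1) (hk : k' = 1) :
    Inv k' (put (First (t + d) 0 e) (t + d, 0) e).1 (put (First (t + d) 0 e) (t + d, 0) e).2
      p q := by
  obtain ⟨hd1, hd2⟩ := hd
  have hsafe : d + e ≤ 5/4 → Safe p q := by
    intro h
    rcases hpq with ⟨rfl, rfl⟩ | ⟨rfl, rfl⟩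
    · exact ⟨by linarith, h, Or.inr (by linarith)⟩
    · exact ⟨h, by linarith, Or.inl (by linarith)⟩
  by_cases hf : t + d + e ≤ 5/4
  · rw [put_pos (first_of_fit hf)]
    exact .safe ⟨hf, by norm_num, Or.inl (by simp only; linarith)⟩ (hsafe (by linarith))
  · have : ¬ First (t + d) 0 e := not_first (by linarith) (Or.inl (by linarith))
    rw [put_neg this]
    simp only [zero_add]
    by_cases hde : d + e ≤ 5/4
    · by_cases h1 : 3/4 ≤ t + d ∨ 3/4 ≤ e
      · exact .safe ⟨by linarith, by linarith, h1⟩ (hsafe hde)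
      · push Not at h1
        refine .critical t (d + e) (hpq.imp (fun h => ⟨h.1.symm, h.2.symm⟩)
          (fun h => ⟨h.2.symm, h.1.symm⟩)) hk h1.1 h1.2 ?_ ?_ ?_ <;> linarith
    · refine .over₂ (d + e) (hpq.symm.imp (fun h => h.1.symm) (fun h => h.2.symm)) ?_ ?_ ?_ <;>
        linarith

lemma next_right (hu0 : 0 ≤ u) (hu : u < 3/4) (hv : Reserved v) (he : 0 < e) (he1 : e ≤ 1)
    (hs : e ≤ 1/2 → k' = 0) (hb : 1/2 < e → k' = 1) : Next k' (u + v) 0 u v e := by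
  unfold Next
  have h := second_of_reserved_right e hu hv
  by_cases hsm : e ≤ 1/2
  · rw [put_pos (h.2 hsm)]
    by_cases h34 : u + e < 3/4
    · rw [put_pos (first_of_fit (by linarith [hv.2]))]
      exact .right (hs hsm) rfl h34 hv
    · refine .safe (safe_first_of_small he hsm ?_ ?_) ⟨?_, ?_, Or.inl ?_⟩ <;>
        (try simp only) <;> linarith [hv.1, hv.2]
  · rw [put_neg (fun h' => hsm (h.1 h'))]
    push Not at hsm
    exact first_big (Or.inl ⟨rfl, rfl⟩) hu0 hu hv hsm he1 (hb hsm)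

lemma next_left (hv0 : 0 ≤ v) (hv : v < 3/4) (hu : Reserved u) (hv' : ¬ Reserved v) (he : 0 < e)
    (he1 : e ≤ 1) (hs : e ≤ 1/2 → k' = 0) (hb : 1/2 < e → k' = 1) :
    Next k' (v + u) 0 u v e := by
  unfold Next
  have h := second_of_reserved_left e hv hu hv'
  by_cases hsm : e ≤ 1/2
  · rw [put_neg (fun h' => not_lt.2 hsm (h.1 h'))]
    by_cases h34 : v + e < 3/4
    · rw [put_pos (first_of_fit (by linarith [hu.2]))]
      exact .left (hs hsm) rfl hu h34
    · refine .safe (safe_first_of_small he hsm ?_ ?_) ⟨?_, ?_, Or.inr ?_⟩ <;>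
        (try simp only) <;> linarith [hu.1, hu.2]
  · push Not at hsm
    rw [put_pos (h.2 hsm)]
    exact first_big (Or.inr ⟨rfl, rfl⟩) hv0 hv hu hsm he1 (hb hsm)

lemma next_early (hu : 1/2 < u) (hu' : u < 3/4) (hv0 : 0 ≤ v) (hv : v ≤ 1/2) (he : 0 < e)
    (he1 : e ≤ 1) (hs : e ≤ 1/2 → k' = 1) (hb : 1/2 < e → k' = 2) : Next k' (u + v) 0 u v e := by
  unfold Next
  have hur : ¬ Reserved u := fun h => by linarith [h.2]
  by_cases hsm : e ≤ 1/2
  · -- A small item goes to `v` only if this keeps `v ≤ 1/2`.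
    by_cases hc : Second u v e
    · rw [put_pos hc]
      by_cases h34 : u + e < 3/4
      · rw [put_pos (first_of_fit (by linarith))]
        refine .early (hs hsm) rfl ?_ ?_ ?_ <;> simp only <;> linarith
      · refine .safe (safe_first_of_small he hsm ?_ ?_) ⟨?_, ?_, Or.inl ?_⟩ <;>
          (try simp only) <;> linarith
    · have hve : v + e ≤ 1/2 := by
        by_contra hcon
        push Not at hcon
        apply hc
        by_cases hvr : Reserved v
        · exact (second_of_reserved_right e hu' hvr).2 hsm
        · exact (second_of_not_reserved e hu' (by linarith) hur hvr).2 (Or.inl ⟨hsm, hcon⟩)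
      rw [put_neg hc, put_pos (first_of_fit (by linarith))]
      refine .early (hs hsm) rfl ?_ ?_ ?_ <;> simp only <;> linarith
  · have hc : ¬ Second u v e := by
      by_cases hvr : Reserved v
      · exact fun h => hsm ((second_of_reserved_right e hu' hvr).1 h)
      · rw [second_of_not_reserved e hu' (by linarith) hur hvr]
        rintro (h | h) <;> linarith [h.1, h.2]
    push Not at hsm
    rw [put_neg hc]
    by_cases hf : u + v + e ≤ 5/4
    · rw [put_pos (first_of_fit hf)]
      refine .noBig (hb hsm) ?_ ?_ ?_ ?_ <;> simp only <;> linarith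
    · have : ¬ First (u + v) 0 e := not_first (by linarith) (Or.inl (by linarith))
      rw [put_neg this]
      by_cases hve : v + e ≤ 5/4
      · refine .noBig (hb hsm) ?_ ?_ ?_ ?_ <;> simp only <;> linarith
      · refine .over₂ (v + e) (Or.inr rfl) ?_ ?_ ?_ <;> (try simp only) <;> linarith

lemma next_noBig (hx : x ≤ 5/4) (hy : y ≤ 5/4) (hu : u ≤ 5/4) (hv : v ≤ 5/4)
    (hsm : e ≤ 1/2) (hbal : x + y = u + v) (ht : x + y + e ≤ 2) (hk : k' = 2) :
    Next k' x y u v e := by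
  unfold Next
  have h1 : (put (First x y e) (x, y) e).1 ≤ 5/4 ∧ (put (First x y e) (x, y) e).2 ≤ 5/4 := by
    by_cases hf : x + e ≤ 5/4
    · rw [put_pos (first_of_fit hf)]; exact ⟨hf, hy⟩
    · have : ¬ First x y e := not_first (by linarith) (Or.inl (by linarith))
      rw [put_neg this]; exact ⟨hx, by simp only; linarith⟩
  have h2 : (put (Second u v e) (u, v) e).1 ≤ 5/4 ∧ (put (Second u v e) (u, v) e).2 ≤ 5/4 := by
    by_cases hl : 3/4 ≤ u ∨ 3/4 ≤ v
    · have := Safe.second (e := e) ⟨hu, hv, hl⟩ (by linarith)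
      exact ⟨this.1, this.2.1⟩
    · push Not at hl
      by_cases hc : Second u v e
      · rw [put_pos hc]; exact ⟨by simp only; linarith, hv⟩
      · rw [put_neg hc]; exact ⟨hu, by simp only; linarith⟩
  exact .noBig hk h1.1 h1.2 h2.1 h2.2

lemma next_over₂ {w : ℝ} (hw : w = u ∨ w = v) (h : 5/4 < w) (hy : w ≤ y + 1/2) (hy1 : y ≤ 1)
    (he : 0 < e) (hbal : x + y = u + v) (ht : x + y + e ≤ 2) : Next k' x y u v e := by
  unfold Next
  rw [put_pos (first_of_fit (by linarith))]
  rcases hw with rfl | rfl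
  · have hc : ¬ Second w v e := by
      rw [second_of_large e (Or.inl (by linarith))]
      linarith
    rw [put_neg hc]
    exact .over₂ w (Or.inl rfl) h hy hy1
  · rw [put_pos ((second_of_large e (Or.inr (by linarith))).2 (by linarith))]
    exact .over₂ w (Or.inr rfl) h hy hy1

lemma next_over₁ {z o : ℝ} (hzo : (z = x ∧ o = y) ∨ (z = y ∧ o = x)) (hz : 5/4 < z)
    (hu : u ≤ o + 1/2) (hv : v ≤ o + 1/2) (he : 0 < e) (ht : x + y + e ≤ 2) :
    Next k' x y u v e := by
  unfold Next
  -- Wherever the second rule puts the item, its loads grow by at most `e`, and so does `o`.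
  have h2 : (put (Second u v e) (u, v) e).1 ≤ o + e + 1/2 ∧
      (put (Second u v e) (u, v) e).2 ≤ o + e + 1/2 := by
    by_cases hc : Second u v e
    · rw [put_pos hc]; constructor <;> simp only <;> linarith
    · rw [put_neg hc]; constructor <;> simp only <;> linarith
  rcases hzo with ⟨rfl, rfl⟩ | ⟨rfl, rfl⟩
  · have : ¬ First z o e := not_first (by linarith) (Or.inl (by linarith))
    rw [put_neg this]
    exact .over₁ z (o + e) (Or.inl ⟨rfl, rfl⟩) hz h2.1 h2.2
  · rw [put_pos (first_of_fit (by linarith))]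
    exact .over₁ z (o + e) (Or.inr ⟨rfl, rfl⟩) hz h2.1 h2.2

lemma next_critical {p q : ℝ} (hpq : (p = u ∧ q = v) ∨ (p = v ∧ q = u)) (hx : x < 3/4)
    (hy : y < 3/4) (hxy : 5/4 < x + y) (hq : q ≤ y + 1/2) (hq' : y + 1/4 ≤ q) (he : 0 < e)
    (hbal : x + y = u + v) (ht : x + y + e ≤ 2) (hs : e ≤ 1/2 → k' = 1) : Next k' x y u v e := by
  have hbal' : x + y = p + q := by
    rcases hpq with ⟨rfl, rfl⟩ | ⟨rfl, rfl⟩ <;> linarith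
  unfold Next
  -- The item joins `p`, the smaller of the two loads.
  have hab : (p + e = (put (Second u v e) (u, v) e).1 ∧ q = (put (Second u v e) (u, v) e).2) ∨
      (p + e = (put (Second u v e) (u, v) e).2 ∧ q = (put (Second u v e) (u, v) e).1) := by
    rcases hpq with ⟨rfl, rfl⟩ | ⟨rfl, rfl⟩
    · rw [put_pos ((second_of_large e (Or.inr (by linarith))).2 (by linarith))]
      exact Or.inl ⟨rfl, rfl⟩
    · have hc : ¬ Second q p e := by
        rw [second_of_large e (Or.inl (by linarith))]
        linarith
      rw [put_neg hc]
      exact Or.inr ⟨rfl, rfl⟩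
  generalize (put (Second u v e) (u, v) e).1 = a at hab ⊢
  generalize (put (Second u v e) (u, v) e).2 = b at hab ⊢
  have hsafe : Safe a b := by
    rcases hab with ⟨rfl, rfl⟩ | ⟨rfl, rfl⟩
    · exact ⟨by linarith, by linarith, Or.inr (by linarith)⟩
    · exact ⟨by linarith, by linarith, Or.inl (by linarith)⟩
  by_cases hf : x + e ≤ 5/4
  · rw [put_pos (first_of_fit hf)]
    by_cases h34 : x + e < 3/4
    · exact .critical (p + e) q hab (hs (by linarith)) h34 hy
        (by simp only; linarith) hq hq'
    · exact .safe ⟨hf, by simp only; linarith, Or.inl (not_lt.1 h34)⟩ hsafe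
  · by_cases hg : y + e ≤ 5/4
    · have : ¬ First x y e := not_first (by linarith) (Or.inl (by linarith))
      rw [put_neg this]
      exact .safe ⟨by simp only; linarith, hg, Or.inr (by simp only; linarith)⟩ hsafe
    · push Not at hf hg
      -- `q ≤ max x y + 1/2` follows from `q ≤ y + 1/2`, and `p + e ≤ 2 - q ≤ max x y + 1/2`
      -- from `q ≥ y + 1/4` and `x + y > 5/4`.
      by_cases hle : x ≤ y
      · rw [put_pos (show First x y e from Or.inr ⟨hg, hle⟩)]
        refine .over₁ (x + e) y (Or.inl ⟨rfl, rfl⟩) hf ?_ ?_ <;>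
          rcases hab with ⟨rfl, rfl⟩ | ⟨rfl, rfl⟩ <;> linarith
      · have : ¬ First x y e := not_first hf (Or.inr (not_le.1 hle))
        rw [put_neg this]
        refine .over₁ (y + e) x (Or.inr ⟨rfl, rfl⟩) hg ?_ ?_ <;>
          rcases hab with ⟨rfl, rfl⟩ | ⟨rfl, rfl⟩ <;> linarith

theorem Inv.step (h : Inv k x y u v) (hu0 : 0 ≤ u) (hv0 : 0 ≤ v)
    (he : 0 < e) (he1 : e ≤ 1) (hbal : x + y = u + v) (ht : x + y + e ≤ 2)
    (hs : e ≤ 1/2 → k' = k) (hb : 1/2 < e → k' = k + 1) (hk2 : k' ≤ 2) :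
    Next k' x y u v e := by
  rcases h with ⟨rfl, rfl, rfl, hv⟩ | ⟨rfl, rfl, hu, hv⟩ | ⟨rfl, rfl, hu, hv⟩ |
    ⟨rfl, rfl, hu, hu', hv⟩ | ⟨h1, h2⟩ | ⟨rfl, hx, hy, hu, hv⟩ |
    ⟨w, hw, h1, h2, h3⟩ | ⟨p, q, hpq, rfl, hx, hy, hxy, hq, hq'⟩ | ⟨z, o, hzo, hz, hu, hv⟩
  · obtain rfl : x = v := by linarith
    exact next_start hv hv0 he1 hs hb
  · obtain rfl : x = u + v := by linarith
    exact next_right hu0 hu hv he he1 hs hb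
  · by_cases hvr : Reserved v
    · obtain rfl : x = u + v := by linarith
      exact next_right hu0 (by linarith [hu.2]) hvr he he1 hs hb
    · obtain rfl : x = v + u := by linarith
      exact next_left hv0 hv hu hvr he he1 hs hb
  · obtain rfl : x = u + v := by linarith
    exact next_early hu hu' hv0 hv he he1 hs hb
  · exact .safe (h1.first he ht) (h2.second (by linarith))
  · by_cases hsm : e ≤ 1/2
    · exact next_noBig hx hy hu hv hsm hbal ht (hs hsm)
    · have := hb (not_le.1 hsm)
      omega
  · exact next_over₂ hw h1 h2 h3 he hbal ht
  · exact next_critical hpq hx hy hxy hq hq' he hbal ht hs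
  · exact next_over₁ hzo hz hu hv he ht

end Steps

/-! ### Algorithms given by placement rules -/

/-- The loads of the two bins after a list of items has been placed by the rule `c`, where
`c x y e` says that an item of size `e` goes to bin `0` if the loads are `x` and `y`. -/
noncomputable def loads (c : ℝ → ℝ → ℝ → Prop) (I : List ℝ) : ℝ × ℝ :=
  I.foldl (fun s e => put (c s.1 s.2 e) s e) (0, 0)

open Classical in
/-- The deterministic online algorithm of the rule `c`; its value on the empty list is irrelevant.
-/
noncomputable def alg (c : ℝ → ℝ → ℝ → Prop) (I : List ℝ) : Fin 2 :=
  if c (loads c I.dropLast).1 (loads c I.dropLast).2 (I.getLastD 0) then 0 else 1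

lemma loads_append (c : ℝ → ℝ → ℝ → Prop) (I : List ℝ) (e : ℝ) :
    loads c (I ++ [e]) = put (c (loads c I).1 (loads c I).2 e) (loads c I) e := by
  simp [loads]

lemma put_sum (c : Prop) (s : ℝ × ℝ) (e : ℝ) :
    (put c s e).1 + (put c s e).2 = s.1 + s.2 + e := by
  unfold put; split_ifs <;> simp only <;> ring

lemma put_nonneg (c : Prop) {s : ℝ × ℝ} {e : ℝ} (h1 : 0 ≤ s.1) (h2 : 0 ≤ s.2) (he : 0 ≤ e) :
    0 ≤ (put c s e).1 ∧ 0 ≤ (put c s e).2 := by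
  unfold put; split_ifs <;> constructor <;> simp only <;> linarith

lemma loads_sum (c : ℝ → ℝ → ℝ → Prop) (I : List ℝ) : (loads c I).1 + (loads c I).2 = I.sum := by
  induction I using List.reverseRecOn with
  | nil => simp [loads]
  | append_singleton I e ih => rw [loads_append, put_sum, ih]; simp

lemma loads_nonneg (c : ℝ → ℝ → ℝ → Prop) (I : List ℝ) (h : ∀ a ∈ I, 0 < a) :
    0 ≤ (loads c I).1 ∧ 0 ≤ (loads c I).2 := by
  induction I using List.reverseRecOn with
  | nil => simp [loads]
  | append_singleton I e ih =>
    rw [loads_append]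
    have := ih fun a ha => h a (by simp [ha])
    exact put_nonneg _ this.1 this.2 (h e (by simp)).le

/-- The load of bin `b`, as a sum over natural-number indices. -/
noncomputable def binSum (A : List ℝ → Fin 2) (I : List ℝ) (b : Fin 2) : ℝ :=
  ∑ i ∈ Finset.range I.length, if A (I.take (i + 1)) = b then I.getD i 0 else 0

lemma sum_detRun (A : List ℝ → Fin 2) (I : List ℝ) (b : Fin 2) :
    ∑ i ∈ Finset.univ.filter (fun i => detRun A I i = b), I.get i = binSum A I b := by
  rw [Finset.sum_filter, binSum, Finset.sum_range]
  refine Finset.sum_congr rfl fun i _ => ?_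
  simp only [detRun, List.get_eq_getElem, List.getD_eq_getElem _ _ i.2]
  -- the two conditionals differ only in their decidability instances
  congr

lemma binSum_append (A : List ℝ → Fin 2) (I : List ℝ) (e : ℝ) (b : Fin 2) :
    binSum A (I ++ [e]) b = binSum A I b + if A (I ++ [e]) = b then e else 0 := by
  unfold binSum
  rw [List.length_append, List.length_singleton, Finset.sum_range_succ]
  congr 1
  · refine Finset.sum_congr rfl fun i hi => ?_
    have hi := Finset.mem_range.1 hi
    rw [List.take_append_of_le_length (by omega), List.getD_append _ _ _ _ hi]
  · rw [List.take_of_length_le (by simp)]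
    simp

lemma binSum_alg (c : ℝ → ℝ → ℝ → Prop) (I : List ℝ) :
    binSum (alg c) I 0 = (loads c I).1 ∧ binSum (alg c) I 1 = (loads c I).2 := by
  induction I using List.reverseRecOn with
  | nil => simp [binSum, loads]
  | append_singleton I e ih =>
    rw [binSum_append, binSum_append, ih.1, ih.2, loads_append]
    by_cases h : c (loads c I).1 (loads c I).2 e <;> simp [alg, put, h]

lemma payoff_alg (c : ℝ → ℝ → ℝ → Prop) (I : List ℝ) :
    payoff 2 I (detRun (alg c) I) = max (loads c I).1 (loads c I).2 := by
  unfold payoff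
  simp only [sum_detRun]
  rw [← (binSum_alg c I).1, ← (binSum_alg c I).2]
  apply le_antisymm
  · refine ciSup_le fun b => ?_
    fin_cases b
    · exact le_max_left _ _
    · exact le_max_right _ _
  · have hbdd : BddAbove (Set.range fun b : Fin 2 => binSum (alg c) I b) :=
      (Set.finite_range _).bddAbove
    exact max_le (le_ciSup hbdd 0) (le_ciSup hbdd 1)

/-! ### Instances -/

open Classical in
/-- The number of big items, i.e. of items larger than `1/2`. -/
noncomputable def bigs (I : List ℝ) : ℕ := (I.map fun a => if 1/2 < a then 1 else 0).sum

lemma bigs_append (I : List ℝ) (e : ℝ) :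
    (e ≤ 1/2 → bigs (I ++ [e]) = bigs I) ∧ (1/2 < e → bigs (I ++ [e]) = bigs I + 1) := by
  constructor <;> intro h
  · simp only [bigs, List.map_append, List.sum_append, List.map_singleton, List.sum_singleton,
      if_neg (not_lt.2 h), add_zero]
  · simp only [bigs, List.map_append, List.sum_append, List.map_singleton, List.sum_singleton,
      if_pos h]

lemma sum_le_two {I : List ℝ} (h : Fits 2 I) : I.sum ≤ 2 := by
  obtain ⟨σ, hσ⟩ := h
  have h1 : I.sum = ∑ i, I.get i := by simp
  rw [h1, ← Finset.sum_fiberwise (s := Finset.univ) (g := σ), Fin.sum_univ_two]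
  linarith [hσ 0, hσ 1]

/-- Two big items cannot share a bin of unit size. -/
lemma bigs_le_two {I : List ℝ} (hpos : ∀ a ∈ I, 0 < a) (h : Fits 2 I) : bigs I ≤ 2 := by
  classical
  obtain ⟨σ, hσ⟩ := h
  have h1 : bigs I = (Finset.univ.filter fun i => 1/2 < I.get i).card := by
    rw [Finset.card_filter, bigs, ← Fin.sum_univ_fun_getElem]
    refine Finset.sum_congr rfl fun i _ => ?_
    simp only [List.get_eq_getElem]
  have hbin : ∀ b, ((Finset.univ.filter fun i => 1/2 < I.get i).filter
      fun i => σ i = b).card ≤ 1 := by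
    intro b
    by_contra hcon
    push Not at hcon
    obtain ⟨i, hi, j, hj, hij⟩ := Finset.one_lt_card.1 hcon
    simp only [Finset.mem_filter, Finset.mem_univ, true_and] at hi hj
    have hsub : ({i, j} : Finset (Fin I.length)) ⊆ Finset.univ.filter fun i => σ i = b := by
      intro l hl
      simp only [Finset.mem_insert, Finset.mem_singleton] at hl
      rcases hl with rfl | rfl <;> simp [hi.2, hj.2]
    have := Finset.sum_le_sum_of_subset_of_nonneg (f := fun i => I.get i) hsub
      fun l _ _ => (hpos _ (List.get_mem I l)).le
    rw [Finset.sum_pair hij] at this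
    linarith [hσ b, hi.1, hj.1]
  rw [h1, Finset.card_eq_sum_card_fiberwise (f := σ) (t := Finset.univ) (by simp),
    Fin.sum_univ_two]
  linarith [hbin 0, hbin 1]

lemma inv_loads (I : List ℝ) (hI : ∀ a ∈ I, 0 < a ∧ a ≤ 1) (ht : I.sum ≤ 2) (hk : bigs I ≤ 2) :
    Inv (bigs I) (loads First I).1 (loads First I).2 (loads Second I).1 (loads Second I).2 := by
  induction I using List.reverseRecOn with
  | nil => exact .start (by simp [bigs]) rfl rfl (by simp [loads])
  | append_singleton I e ih =>
    have hI' : ∀ a ∈ I, 0 < a ∧ a ≤ 1 := fun a ha => hI a (by simp [ha])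
    have he := hI e (by simp)
    rw [List.sum_append, List.sum_singleton] at ht
    have hb := bigs_append I e
    have hk' : bigs I ≤ 2 := by
      rcases le_or_gt e (1/2) with h | h
      · have := hb.1 h; omega
      · have := hb.2 h; omega
    have hnn := loads_nonneg Second I fun a ha => (hI' a ha).1
    have h1 := loads_sum First I
    have h2 := loads_sum Second I
    have := (ih hI' (by linarith [he.1]) hk').step hnn.1 hnn.2 he.1 he.2 (by linarith)
      (by linarith) hb.1 hb.2 hk
    rw [loads_append, loads_append]
    exact this

end BinStretch

theorem exists_M2_algorithm_five_fourths :
    ∃ (A₁ A₂ : List ℝ → Fin 2) (p : ℝ), 0 ≤ p ∧ p ≤ 1 ∧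
      ∀ I : List ℝ, BinStretch.IsInstance 2 I →
        p * BinStretch.payoff 2 I (BinStretch.detRun A₁ I)
          + (1 - p) * BinStretch.payoff 2 I (BinStretch.detRun A₂ I) ≤ (5 : ℝ) / 4 := by
  refine ⟨BinStretch.alg BinStretch.First, BinStretch.alg BinStretch.Second, 1/2, by norm_num,
    by norm_num, ?_⟩
  rintro I ⟨hI, hfit⟩
  have hpos : ∀ a ∈ I, 0 < a := fun a ha => (hI a ha).1
  have ht := BinStretch.sum_le_two hfit
  have h1 := BinStretch.loads_sum BinStretch.First I
  have h2 := BinStretch.loads_sum BinStretch.Second I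
  have n1 := BinStretch.loads_nonneg BinStretch.First I hpos
  have n2 := BinStretch.loads_nonneg BinStretch.Second I hpos
  have := (BinStretch.inv_loads I hI ht (BinStretch.bigs_le_two hpos hfit)).sum_le n1.1 n1.2
    n2.1 n2.2 (by linarith) (by linarith)
  rw [BinStretch.payoff_alg, BinStretch.payoff_alg]
  linarith
end

section
/- Let m ≥ 1, s ≥ 1 and ε > 0. For each i ∈ {1,…,s} let qᵢ and q'ᵢ be functions assigning to each decision history D ∈ {1,…,m}^{i−1} a probability distribution on {1,…,m}, and suppose that for every i, every history D ∈ {1,…,m}^{i−1} and every decision d ∈ {1,…,m}, |qᵢ(D)(d) − q'ᵢ(D)(d)| ≤ ε/(m²·2^i). Let f : {1,…,m}^s → ℝ satisfy |f(D)| ≤ m for all D. Then |∑_{D ∈ {1,…,m}^s} (∏_{i=1}^s qᵢ(D₁,…,D_{i−1})(Dᵢ))·f(D) − ∑_{D ∈ {1,…,m}^s} (∏_{i=1}^s q'ᵢ(D₁,…,D_{i−1})(Dᵢ))·f(D)| ≤ ε. That is, two behavioral decision processes whose step-i decision probabilities differ by at most ε/(m²·2^i) have expected payoffs differing by at most ε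 for any payoff function bounded by m. -/
/-!
The total variation estimate behind the theorem: if the step-`i` decision probabilities of two
processes differ by at most `δ i`, the `ℓ¹` distance between the induced laws on decision sequences
is at most `∑ i, m * δ i` (`sum_abs_seqProb_sub_le`). This goes by induction on the length, peeling
off the last decision: with `P, P'` the laws of the history and `a, a'` the last-step distributions,
`|P a - P' a'| ≤ |P - P'| a + P' |a - a'|`, where `a` and `P'` have total mass one and
`|a - a'|` sums to at most `m δ`. For `δ i = ε / (m² 2^(i+1))` the geometric series bounds the
distance by `ε / m`, and a payoff bounded by `m` turns this into `ε`.
-/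

open scoped BigOperators

noncomputable def seqProb {m s : ℕ}
    (q : ∀ i : Fin s, (Fin i.1 → Fin m) → PMF (Fin m)) (D : Fin s → Fin m) : ℝ :=
  ∏ i : Fin s, ((q i fun j : Fin i.1 => D (Fin.castLE i.2.le j)) (D i)).toReal

lemma seqProb_nonneg {m s : ℕ} (q : ∀ i : Fin s, (Fin i.1 → Fin m) → PMF (Fin m))
    (D : Fin s → Fin m) : 0 ≤ seqProb q D :=
  Finset.prod_nonneg fun _ _ => ENNReal.toReal_nonneg

lemma sum_toReal_pmf {m : ℕ} (p : PMF (Fin m)) : ∑ d, (p d).toReal = 1 := by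
  rw [← ENNReal.toReal_sum fun d _ => p.apply_ne_top d, ← tsum_fintype (L := .unconditional _),
    p.tsum_coe, ENNReal.toReal_one]

/-- The law of a process of length `s + 1` factors into the law of the first `s` decisions and the
conditional probability of the last one. -/
lemma seqProb_snoc {m s : ℕ} (q : ∀ i : Fin (s + 1), (Fin i.1 → Fin m) → PMF (Fin m))
    (D : Fin s → Fin m) (d : Fin m) :
    seqProb q (Fin.snoc D d : Fin (s + 1) → Fin m) =
      seqProb (fun i : Fin s => q i.castSucc) D * ((q (Fin.last s) D) d).toReal := by
  have hist : ∀ (k : ℕ) (hk : k ≤ s) (j : Fin k),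
      (Fin.snoc D d : Fin (s + 1) → Fin m) (Fin.castLE (hk.trans s.le_succ) j) =
        D (Fin.castLE hk j) := fun k hk j =>
    Fin.snoc_castSucc (α := fun _ => Fin m) d D (Fin.castLE hk j)
  unfold seqProb
  rw [Fin.prod_univ_castSucc]
  congr 1
  · refine Finset.prod_congr rfl fun i _ => ?_
    rw [Fin.snoc_castSucc (α := fun _ => Fin m)]
    have h := funext (hist i.1 i.2.le)
    exact congrArg (fun H => ((q i.castSucc H) (D i)).toReal) h
  · rw [Fin.snoc_last (α := fun _ => Fin m)]
    have h := funext (hist s le_rfl)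
    exact congrArg (fun H => ((q (Fin.last s) H) d).toReal) h

lemma sum_snoc {m s : ℕ} (g : (Fin (s + 1) → Fin m) → ℝ) :
    ∑ D, g D = ∑ D : Fin s → Fin m, ∑ d : Fin m, g (Fin.snoc D d : Fin (s + 1) → Fin m) := by
  rw [← (Fin.snocEquiv fun _ : Fin (s + 1) => Fin m).sum_comp, Fintype.sum_prod_type_right]
  rfl

lemma sum_seqProb {m : ℕ} : ∀ {s : ℕ} (q : ∀ i : Fin s, (Fin i.1 → Fin m) → PMF (Fin m)),
    ∑ D, seqProb q D = 1
  | 0, q => by simp [seqProb]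
  | s + 1, q => by
    simp_rw [sum_snoc, seqProb_snoc, ← Finset.mul_sum, sum_toReal_pmf, mul_one]
    exact sum_seqProb _

/-- The `ℓ¹` distance between the laws of two processes is at most the sum over the steps of the
worst-case `ℓ¹` distance between their one-step distributions. -/
lemma sum_abs_seqProb_sub_le {m : ℕ} (δ : ℕ → ℝ) : ∀ {s : ℕ}
    (q q' : ∀ i : Fin s, (Fin i.1 → Fin m) → PMF (Fin m)),
    (∀ i : Fin s, ∀ D : Fin i.1 → Fin m, ∀ d : Fin m,
      |((q i D) d).toReal - ((q' i D) d).toReal| ≤ δ i.1) →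
    ∑ D, |seqProb q D - seqProb q' D| ≤ ∑ i ∈ Finset.range s, m * δ i
  | 0, q, q', _ => by simp [seqProb]
  | s + 1, q, q', h => by
    rw [sum_snoc, Finset.sum_range_succ]
    have ih := sum_abs_seqProb_sub_le δ (fun i : Fin s => q i.castSucc)
      (fun i : Fin s => q' i.castSucc) fun i D d => h i.castSucc D d
    have mass := sum_seqProb (fun i : Fin s => q' i.castSucc)
    have key : ∀ D : Fin s → Fin m,
        ∑ d : Fin m, |seqProb q (Fin.snoc D d : Fin (s + 1) → Fin m)
            - seqProb q' (Fin.snoc D d : Fin (s + 1) → Fin m)| ≤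
          |seqProb (fun i : Fin s => q i.castSucc) D - seqProb (fun i : Fin s => q' i.castSucc) D|
            + seqProb (fun i : Fin s => q' i.castSucc) D * (m * δ s) := by
      intro D
      simp_rw [seqProb_snoc]
      set P := seqProb (fun i : Fin s => q i.castSucc) D
      set P' := seqProb (fun i : Fin s => q' i.castSucc) D
      have hP' : 0 ≤ P' := seqProb_nonneg _ _
      calc _ ≤ ∑ d : Fin m, (|P - P'| * ((q (Fin.last s) D) d).toReal + P' * δ s) := by
            refine Finset.sum_le_sum fun d _ => ?_
            have hd := h (Fin.last s) D d
            set a := ((q (Fin.last s) D) d).toReal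
            set a' := ((q' (Fin.last s) D) d).toReal
            have ha : 0 ≤ a := ENNReal.toReal_nonneg
            calc |P * a - P' * a'| = |(P - P') * a + P' * (a - a')| := by ring_nf
              _ ≤ |(P - P') * a| + |P' * (a - a')| := abs_add_le _ _
              _ = |P - P'| * a + P' * |a - a'| := by
                rw [abs_mul, abs_mul, abs_of_nonneg ha, abs_of_nonneg hP']
              _ ≤ _ := by gcongr; exact hd
        _ = _ := by
            have h1 := sum_toReal_pmf (q (Fin.last s) D)
            rw [Finset.sum_add_distrib, ← Finset.mul_sum]
            erw [h1]
            simp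
            ring
    refine (Finset.sum_le_sum fun D _ => key D).trans ?_
    rw [Finset.sum_add_distrib, ← Finset.sum_mul, mass, one_mul]
    gcongr

theorem close_behavioral_processes_close_expectations
    (m s : ℕ) (hm : 1 ≤ m) (hs : 1 ≤ s) (ε : ℝ) (hε : 0 < ε)
    (q q' : ∀ i : Fin s, (Fin i.1 → Fin m) → PMF (Fin m))
    (hclose : ∀ i : Fin s, ∀ D : Fin i.1 → Fin m, ∀ d : Fin m,
      |((q i D) d).toReal - ((q' i D) d).toReal| ≤ ε / (m ^ 2 * 2 ^ (i.1 + 1)))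
    (f : (Fin s → Fin m) → ℝ) (hf : ∀ D, |f D| ≤ m) :
    |(∑ D : Fin s → Fin m, seqProb q D * f D)
      - (∑ D : Fin s → Fin m, seqProb q' D * f D)| ≤ ε := by
  have hm' : (0 : ℝ) < m := by exact_mod_cast hm
  have tv := sum_abs_seqProb_sub_le (fun i => ε / (m ^ 2 * 2 ^ (i + 1))) q q' hclose
  have geom : ∀ n : ℕ, ∑ i ∈ Finset.range n, (m : ℝ) * (ε / (m ^ 2 * 2 ^ (i + 1))) =
      ε / m * (1 - 1 / 2 ^ n) := by
    intro n
    induction n with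
    | zero => simp
    | succ n ih =>
      rw [Finset.sum_range_succ, ih]
      field_simp
      ring
  rw [geom] at tv
  rw [← Finset.sum_sub_distrib]
  calc _ ≤ ∑ D, |seqProb q D * f D - seqProb q' D * f D| := Finset.abs_sum_le_sum_abs _ _
    _ ≤ ∑ D, |seqProb q D - seqProb q' D| * m := by
        refine Finset.sum_le_sum fun D _ => ?_
        rw [← sub_mul, abs_mul]
        exact mul_le_mul_of_nonneg_left (hf D) (abs_nonneg _)
    _ ≤ ε / m * (1 - 1 / 2 ^ s) * m := by
        rw [← Finset.sum_mul]
        gcongr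
    _ = ε * (1 - 1 / 2 ^ s) := by field_simp
    _ ≤ ε := mul_le_of_le_one_right hε.le (by
        have : (0 : ℝ) ≤ 1 / 2 ^ s := by positivity
        linarith)
end

section
/- Define g : ℝ → ℝ by g(z) = 1/√|z| for z ≠ 0 and g(0) = 0. Then for every y ∈ ℝ, ∫_{x ∈ [0,∞)} e^{−x}·g(x − y) dx ≤ 2√π. In particular, in the guessing game with payoff f(x,y) = 1/√|x−y| for x ≠ y and 0 for x = y, the randomized strategy for the minimizing player that draws x from the exponential distribution with density e^{−x} on [0,∞) has worst-case expected payoff at most 2√π, even though every deterministic strategy has worst-case payoff +∞. -/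
/-!
Write `g = invSqrtAbs` and `J = ∫₀^∞ e^{-t} t^{-1/2} dt = Γ(1/2) = √π`. For `y < 0` and
`x > 0` one has `g (x - y) ≤ g x`,
so the integral is at most `J`. For `y ≥ 0`, split at `y`. On `(y, ∞)` translate by `y` and drop
the factor `e^{-y} ≤ 1`, which gives at most `J`. On `(0, y)` both `e^{-t}` and `g t` are decreasing,
so the rearrangement inequality for the two points `x` and `y - x`,
`e^{-x} g (y - x) + e^{-(y - x)} g x ≤ e^{-x} g x + e^{-(y - x)} g (y - x)`,
integrated over `(0, y)`, gives at most `∫₀^y e^{-t} g t dt ≤ J`. The estimates are carried out with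
the lower Lebesgue integral, so that only measurability is required.
-/

open scoped BigOperators

noncomputable def invSqrtAbs : ℝ → ℝ := fun z => if z = 0 then 0 else 1 / Real.sqrt |z|

open MeasureTheory Set

lemma invSqrtAbs_nonneg (z : ℝ) : 0 ≤ invSqrtAbs z := by
  unfold invSqrtAbs
  split_ifs <;> positivity

lemma measurable_invSqrtAbs : Measurable invSqrtAbs := by
  unfold invSqrtAbs
  exact Measurable.ite (measurableSet_singleton 0) measurable_const (by fun_prop)

lemma invSqrtAbs_neg (z : ℝ) : invSqrtAbs (-z) = invSqrtAbs z := by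
  simp [invSqrtAbs]

lemma invSqrtAbs_anti {a b : ℝ} (ha : 0 < a) (hab : a ≤ b) : invSqrtAbs b ≤ invSqrtAbs a := by
  have hb : 0 < b := ha.trans_le hab
  simp only [invSqrtAbs, ha.ne', hb.ne', if_false, abs_of_pos ha, abs_of_pos hb]
  exact one_div_le_one_div_of_le (Real.sqrt_pos.2 ha) (Real.sqrt_le_sqrt hab)

lemma measurable_exp_mul_invSqrtAbs (y : ℝ) :
    Measurable fun x : ℝ => Real.exp (-x) * invSqrtAbs (x - y) := by
  have := measurable_invSqrtAbs
  fun_prop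

/-- The value `Γ(1/2) = √π`. -/
lemma lintegral_exp_mul_invSqrtAbs :
    ∫⁻ x in Ioi (0 : ℝ), ENNReal.ofReal (Real.exp (-x) * invSqrtAbs x)
      = ENNReal.ofReal (Real.sqrt Real.pi) := by
  have h := Real.Gamma_eq_integral (s := 1 / 2) (by norm_num)
  rw [Real.Gamma_one_half_eq] at h
  have hc := Real.GammaIntegral_convergent (s := 1 / 2) (by norm_num)
  rw [h, ofReal_integral_eq_lintegral_ofReal hc]
  · refine setLIntegral_congr_fun measurableSet_Ioi fun x hx => ?_
    have hx : 0 < x := hx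
    simp only [invSqrtAbs, hx.ne', if_false, abs_of_pos hx]
    congr 2
    rw [show (1 / 2 - 1 : ℝ) = -(1 / 2) by norm_num, Real.rpow_neg hx.le, Real.sqrt_eq_rpow,
      one_div]
  · filter_upwards [ae_restrict_mem measurableSet_Ioi] with x hx
    have hx : 0 < x := hx
    simp only [Pi.zero_apply]
    positivity

lemma lintegral_right_le {y : ℝ} (hy : 0 ≤ y) :
    ∫⁻ x in Ioi y, ENNReal.ofReal (Real.exp (-x) * invSqrtAbs (x - y))
      ≤ ENNReal.ofReal (Real.sqrt Real.pi) := by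
  have h := (measurePreserving_sub_right volume y).setLIntegral_comp_preimage
    (measurableSet_Ioi (a := (0 : ℝ))) (f := fun x => ENNReal.ofReal (Real.exp (-x) * invSqrtAbs x))
    (by simpa using (measurable_exp_mul_invSqrtAbs 0).ennreal_ofReal)
  rw [lintegral_exp_mul_invSqrtAbs] at h
  rw [← h]
  have hs : (fun x : ℝ => x - y) ⁻¹' Ioi 0 = Ioi y := by ext; simp
  rw [hs]
  refine lintegral_mono fun x => ENNReal.ofReal_le_ofReal ?_
  refine mul_le_mul_of_nonneg_right (Real.exp_le_exp.2 ?_) (invSqrtAbs_nonneg _)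
  linarith

lemma lintegral_reflect (y : ℝ) {f : ℝ → ENNReal} (hf : Measurable f) :
    ∫⁻ x in Ioo 0 y, f (y - x) = ∫⁻ x in Ioo 0 y, f x := by
  have h := (Measure.measurePreserving_sub_left volume y).setLIntegral_comp_preimage
    (measurableSet_Ioo (a := (0 : ℝ)) (b := y)) hf
  have hs : (fun x : ℝ => y - x) ⁻¹' Ioo 0 y = Ioo 0 y := by
    ext x
    simp [and_comm]
  rwa [hs] at h

/-- Two-point rearrangement for the decreasing functions `e^{-t}` and `t^{-1/2}`. -/
lemma rearrange {a b : ℝ} (ha : 0 < a) (hb : 0 < b) :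
    Real.exp (-a) * invSqrtAbs b + Real.exp (-b) * invSqrtAbs a
      ≤ Real.exp (-a) * invSqrtAbs a + Real.exp (-b) * invSqrtAbs b := by
  rcases le_total a b with h | h
  · have h1 := invSqrtAbs_anti ha h
    have h2 : Real.exp (-b) ≤ Real.exp (-a) := Real.exp_le_exp.2 (by linarith)
    nlinarith [mul_nonneg (sub_nonneg.2 h1) (sub_nonneg.2 h2)]
  · have h1 := invSqrtAbs_anti hb h
    have h2 : Real.exp (-a) ≤ Real.exp (-b) := Real.exp_le_exp.2 (by linarith)
    nlinarith [mul_nonneg (sub_nonneg.2 h1) (sub_nonneg.2 h2)]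

lemma lintegral_left_le (y : ℝ) :
    ∫⁻ x in Ioo 0 y, ENNReal.ofReal (Real.exp (-x) * invSqrtAbs (x - y))
      ≤ ENNReal.ofReal (Real.sqrt Real.pi) := by
  set K : ℝ → ENNReal := fun x => ENNReal.ofReal (Real.exp (-x) * invSqrtAbs (x - y)) with hK
  set H : ℝ → ENNReal := fun x => ENNReal.ofReal (Real.exp (-x) * invSqrtAbs x) with hH
  have mK : Measurable K := (measurable_exp_mul_invSqrtAbs y).ennreal_ofReal
  have mH : Measurable H := by simpa using (measurable_exp_mul_invSqrtAbs 0).ennreal_ofReal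
  have key : (∫⁻ x in Ioo 0 y, K x) + ∫⁻ x in Ioo 0 y, K x
      ≤ (∫⁻ x in Ioo 0 y, H x) + ∫⁻ x in Ioo 0 y, H x := by
    calc (∫⁻ x in Ioo 0 y, K x) + ∫⁻ x in Ioo 0 y, K x
        = ∫⁻ x in Ioo 0 y, (K x + K (y - x)) := by
          rw [lintegral_add_left mK, lintegral_reflect y mK]
      _ ≤ ∫⁻ x in Ioo 0 y, (H x + H (y - x)) := by
          refine setLIntegral_mono' measurableSet_Ioo fun x hx => ?_
          have e1 : invSqrtAbs (x - y) = invSqrtAbs (y - x) := by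
            rw [← invSqrtAbs_neg, neg_sub]
          have e2 : invSqrtAbs (y - x - y) = invSqrtAbs x := by
            rw [← invSqrtAbs_neg]; congr 1; ring
          have n (a b : ℝ) : 0 ≤ Real.exp a * invSqrtAbs b :=
            mul_nonneg (Real.exp_pos _).le (invSqrtAbs_nonneg _)
          simp only [hK, hH, e1, e2]
          rw [← ENNReal.ofReal_add (n _ _) (n _ _), ← ENNReal.ofReal_add (n _ _) (n _ _)]
          exact ENNReal.ofReal_le_ofReal (rearrange hx.1 (sub_pos.2 hx.2))
      _ = _ := by rw [lintegral_add_left mH, lintegral_reflect y mH]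
  have key' : ∫⁻ x in Ioo 0 y, K x ≤ ∫⁻ x in Ioo 0 y, H x := by
    by_contra! hlt
    exact absurd key (not_le.2 (ENNReal.add_lt_add hlt hlt))
  refine key'.trans ?_
  rw [← lintegral_exp_mul_invSqrtAbs]
  exact lintegral_mono_set Ioo_subset_Ioi_self

lemma lintegral_le (y : ℝ) :
    ∫⁻ x in Ici (0 : ℝ), ENNReal.ofReal (Real.exp (-x) * invSqrtAbs (x - y))
      ≤ ENNReal.ofReal (Real.sqrt Real.pi) + ENNReal.ofReal (Real.sqrt Real.pi) := by
  rw [setLIntegral_congr (Ioi_ae_eq_Ici (a := (0 : ℝ))).symm]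
  rcases lt_or_ge y 0 with hy | hy
  · refine le_trans ?_ le_self_add
    rw [← lintegral_exp_mul_invSqrtAbs]
    refine setLIntegral_mono' measurableSet_Ioi fun x hx => ENNReal.ofReal_le_ofReal ?_
    exact mul_le_mul_of_nonneg_left (invSqrtAbs_anti hx (by linarith)) (Real.exp_pos _).le
  · rw [← Ioc_union_Ioi_eq_Ioi hy]
    refine (lintegral_union_le _ _ _).trans (add_le_add ?_ (lintegral_right_le hy))
    rw [setLIntegral_congr Ioo_ae_eq_Ioc.symm]
    exact lintegral_left_le y

theorem exponential_strategy_bounded_expected_payoff (y : ℝ) :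
    ∫ x in Set.Ici (0 : ℝ), Real.exp (-x) * invSqrtAbs (x - y) ≤ 2 * Real.sqrt Real.pi := by
  rw [integral_eq_lintegral_of_nonneg_ae
    (Filter.Eventually.of_forall fun x =>
      mul_nonneg (Real.exp_pos _).le (invSqrtAbs_nonneg _))
    (measurable_exp_mul_invSqrtAbs y).aestronglyMeasurable]
  refine ENNReal.toReal_le_of_le_ofReal (by positivity) ((lintegral_le y).trans ?_)
  rw [← ENNReal.ofReal_add (Real.sqrt_nonneg _) (Real.sqrt_nonneg _), two_mul]
end

section
/- Define the payoff f : ℝ × ℝ → [0,∞] by f(x,y) = 1/√|x−y| for x ≠ y and f(x,y) = 0 for x = y. Then for every probability mass function p on ℝ (a countably supported probability distribution, i.e., a PMF), the supremum over y ∈ ℝ of the expected payoff ∑'_{x∈ℝ} p(x)·f(x,y) (a sum in the extended nonnegative reals) equals +∞. That is, every mixed strategy supported on a countable set of deterministic strategies has worst-case expected payoff +∞ in this game. -/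
/-! A PMF has an atom `x₀`, and the payoff against `x₀` tends to `∞` as `y` approaches `x₀` with
`y ≠ x₀`. Keeping only the term of `x₀` in the expected payoff therefore already gives an
unbounded lower bound. -/

open scoped BigOperators

open scoped ENNReal

noncomputable def guessPayoff (x y : ℝ) : ℝ≥0∞ :=
  if x = y then 0 else (ENNReal.ofReal (Real.sqrt |x - y|))⁻¹

theorem countable_mixed_strategy_unbounded (p : PMF ℝ) :
    (⨆ y : ℝ, ∑' x : ℝ, p x * guessPayoff x y) = ⊤ := by
  obtain ⟨x₀, hx₀⟩ := p.support_nonempty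
  have hp : p x₀ ≠ 0 := (p.mem_support_iff x₀).1 hx₀
  have hn : ∀ n : ℕ, p x₀ * (n : ℝ≥0∞) ≤ ⨆ y : ℝ, ∑' x : ℝ, p x * guessPayoff x y := by
    intro n
    rcases Nat.eq_zero_or_pos n with rfl | hpos
    · simp
    -- At distance `1 / n ^ 2` from `x₀` the payoff against `x₀` is exactly `n`.
    have hf : guessPayoff x₀ (x₀ + ((n : ℝ)⁻¹) ^ 2) = n := by
      have hr : (0 : ℝ) < (n : ℝ)⁻¹ := by positivity
      have hne : x₀ ≠ x₀ + ((n : ℝ)⁻¹) ^ 2 := by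
        have := pow_pos hr 2
        linarith
      have habs : |x₀ - (x₀ + ((n : ℝ)⁻¹) ^ 2)| = ((n : ℝ)⁻¹) ^ 2 := by
        rw [sub_add_cancel_left, abs_neg, abs_of_nonneg (sq_nonneg _)]
      rw [guessPayoff, if_neg hne, habs, Real.sqrt_sq hr.le,
        ENNReal.ofReal_inv_of_pos (by positivity), inv_inv, ENNReal.ofReal_natCast]
    calc p x₀ * (n : ℝ≥0∞) = p x₀ * guessPayoff x₀ (x₀ + ((n : ℝ)⁻¹) ^ 2) := by rw [hf]
      _ ≤ ∑' x : ℝ, p x * guessPayoff x (x₀ + ((n : ℝ)⁻¹) ^ 2) :=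
        ENNReal.le_tsum (f := fun x => p x * guessPayoff x (x₀ + ((n : ℝ)⁻¹) ^ 2)) x₀
      _ ≤ _ := le_iSup (fun y : ℝ => ∑' x : ℝ, p x * guessPayoff x y) _
  have h := iSup_le hn
  rwa [← ENNReal.mul_iSup, ENNReal.iSup_natCast, ENNReal.mul_top hp, top_le_iff] at h
end
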